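/- arXiv:2007.00132 — 2 statements merged into one kernel-verified Lean document; each statement's English description precedes it below -/
import Mathlib

section
/- Let K ≥ 1 be an integer, P a real n×n̄ matrix, S_1,…,S_K symmetric positive semidefinite n̄×n̄ matrices with S_1+⋯+S_K positive definite, and 𝒯 ⊆ ℝ_{≥0}^K a nonempty convex compact monotone set containing a point with all coordinates positive. Let A be a symmetric n×n matrix, b ∈ ℝ^n, s > 0, and set Q = PᵀAP, q = Pᵀb, Q_+ = [[Q, q],[qᵀ, 0]]. Then Opt[s] ≤ Opt_*[κ·s] with κ = 3·ln(6K), where Opt[s] = inf{ s·φ_𝒯(λ) + μ : λ ∈ ℝ^K, λ ≥ 0, μ ≥ 0, Q_+ ⪯ BlockDiag(∑_k λ_k S_k, μ) } and Opt_*[s'] = sup{ xᵀAx + 2bᵀx : x ∈ 𝒳[s'] }. -/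
/-!
By separation of convex sets, the Lagrangian dual value `Opt[s]` is the supremum of `tr (Q₊ W)`
over positive semidefinite `W` with `tr (BlockDiag (S_k, 0) W) ≤ s t_k`, `t ∈ 𝒯`, and last diagonal
entry at most `1`. Such a `W` is rounded by random signs: write `W = L Lᵀ` with `Lᵀ Q₊ L` diagonal,
which is possible because `L` may be multiplied by any orthogonal matrix on the right. Then
`y = L ε` satisfies `yᵀ Q₊ y = tr (Q₊ W)` for *every* sign vector `ε`, so it only remains to find a
sign vector for which `y` is nearly feasible. For uniformly random `ε`, the last coordinate of `y`
lies in `[-1, 1]` with probability at least `1 / 3`, whereas each of the `K` constraints, relaxed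
by the factor `3 log (6 K)`, fails with probability at most `√3 / (6 K)`. As `√3 / 6 < 1 / 3`, some
`ε` avoids all failures. If `y = (z, τ)` with `|τ| ≤ 1`, one of `z` and `-z` makes the inhomogeneous
objective at least `yᵀ Q₊ y`.
-/

open Matrix BigOperators

noncomputable section

/-- The ellitope `𝒳[s]`: image under `z ↦ P z` of the set of `z` with
`zᵀ S_k z ≤ s t_k` for some `t ∈ 𝒯`. -/
def ellitope {n nb K : ℕ} (P : Matrix (Fin n) (Fin nb) ℝ)
    (S : Fin K → Matrix (Fin nb) (Fin nb) ℝ) (T : Set (Fin K → ℝ)) (s : ℝ) :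
    Set (Fin n → ℝ) :=
  {x | ∃ z : Fin nb → ℝ, ∃ t ∈ T, x = P *ᵥ z ∧ ∀ k, z ⬝ᵥ (S k) *ᵥ z ≤ s * t k}

/-- Support function `φ_𝒯(λ) = max_{t ∈ 𝒯} λᵀ t`. -/
def suppFn {K : ℕ} (T : Set (Fin K → ℝ)) (lam : Fin K → ℝ) : ℝ :=
  sSup ((fun t => ∑ k, lam k * t k) '' T)

/-- `Q_+ = [[Q, q],[qᵀ, 0]]`. -/
def qPlus {m : ℕ} (Q : Matrix (Fin m) (Fin m) ℝ) (q : Fin m → ℝ) :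
    Matrix (Fin m ⊕ Unit) (Fin m ⊕ Unit) ℝ :=
  Matrix.fromBlocks Q (Matrix.of fun i _ => q i) (Matrix.of fun _ j => q j) 0

/-- `BlockDiag(M, μ)`. -/
def blockDiagOne {m : ℕ} (M : Matrix (Fin m) (Fin m) ℝ) (μ : ℝ) :
    Matrix (Fin m ⊕ Unit) (Fin m ⊕ Unit) ℝ :=
  Matrix.fromBlocks M 0 0 (Matrix.of fun _ _ => μ)

section Duality

theorem nonneg_of_forall_add_mul_nonneg {c d : ℝ} (h : ∀ r : ℝ, 0 ≤ r → 0 ≤ c + r * d) :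
    0 ≤ d := by
  by_contra! hd
  have hr := h ((|c| + 1) / -d) (div_nonneg (by positivity) (by linarith))
  have hcancel : (|c| + 1) / -d * d = -(|c| + 1) := by
    rw [div_neg, neg_mul, div_mul_cancel₀ _ hd.ne]
  linarith [le_abs_self c]

theorem isOpen_setOf_exists_forall_lt {E J : Type*} [Finite J] (X : Set E) (g : J → E → ℝ) :
    IsOpen {u : J → ℝ | ∃ x ∈ X, ∀ j, g j x < u j} := by
  have hunion : {u : J → ℝ | ∃ x ∈ X, ∀ j, g j x < u j} =
      ⋃ x ∈ X, Set.univ.pi fun j => Set.Ioi (g j x) := by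
    ext u
    simp
  rw [hunion]
  exact isOpen_biUnion fun x _ => isOpen_set_pi Set.finite_univ fun j _ => isOpen_Ioi

variable {E J : Type*} [AddCommGroup E] [Module ℝ E]

theorem convex_setOf_exists_forall_lt [Nonempty J] {X : Set E} {g : J → E → ℝ}
    (hg : ∀ j, ConvexOn ℝ X (g j)) : Convex ℝ {u : J → ℝ | ∃ x ∈ X, ∀ j, g j x < u j} := by
  rintro u ⟨x, hx, hxu⟩ v ⟨y, hy, hyv⟩ a b ha hb hab
  refine ⟨a • x + b • y, (hg (Classical.arbitrary J)).1 hx hy ha hb hab, fun j => ?_⟩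
  have hux : (x, u j) ∈ {p : E × ℝ | p.1 ∈ X ∧ g j p.1 < p.2} := ⟨hx, hxu j⟩
  have hvy : (y, v j) ∈ {p : E × ℝ | p.1 ∈ X ∧ g j p.1 < p.2} := ⟨hy, hyv j⟩
  exact ((hg j).convex_strict_epigraph hux hvy ha hb hab).2

variable [Fintype J]

theorem exists_nonneg_ne_zero_forall_sum_mul_nonneg {X : Set E} (hX : X.Nonempty)
    {g : J → E → ℝ} (hg : ∀ j, ConvexOn ℝ X (g j)) (hpos : ∀ x ∈ X, ∃ j, 0 ≤ g j x) :
    ∃ lam : J → ℝ, (∀ j, 0 ≤ lam j) ∧ lam ≠ 0 ∧ ∀ x ∈ X, 0 ≤ ∑ j, lam j * g j x := by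
  classical
  obtain ⟨x₀, hx₀⟩ := hX
  have : Nonempty J := ⟨(hpos x₀ hx₀).choose⟩
  obtain ⟨f, hf⟩ := geometric_hahn_banach_point_open (convex_setOf_exists_forall_lt hg)
    (isOpen_setOf_exists_forall_lt X g) (x := 0)
    fun ⟨x, hx, hlt⟩ => (hpos x hx).elim fun j hj => (hlt j).not_ge hj
  set lam : J → ℝ := fun j => f (Pi.single j 1)
  have hf_eq (u : J → ℝ) : f u = ∑ j, lam j * u j := by
    conv_lhs => rw [pi_eq_sum_univ' u, map_sum]
    exact Finset.sum_congr rfl fun j _ => by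
      rw [map_smul, smul_eq_mul, mul_comm]
  simp only [map_zero, Set.mem_ofPred_eq] at hf
  refine ⟨lam, fun j => ?_, ?_, fun x hx => ?_⟩
  · refine nonneg_of_forall_add_mul_nonneg (c := f fun i => g i x₀ + 1) fun r hr => ?_
    rw [← smul_eq_mul, ← map_smul, ← map_add]
    refine (hf _ ⟨x₀, hx₀, fun i => (lt_add_one _).trans_le ?_⟩).le
    have hsingle : (0 : J → ℝ) ≤ Pi.single j 1 := Pi.single_nonneg.2 zero_le_one
    exact le_add_of_nonneg_right (mul_nonneg hr (hsingle i))
  · intro hlam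
    simpa [hf_eq, hlam] using hf (fun i => g i x₀ + 1) ⟨x₀, hx₀, fun i => lt_add_one _⟩
  · have hlim : Filter.Tendsto (fun δ : ℝ => ∑ j, lam j * (g j x + δ)) (nhdsWithin 0 (Set.Ioi 0))
        (nhds (∑ j, lam j * g j x)) := by
      have hcont : Continuous fun δ : ℝ => ∑ j, lam j * (g j x + δ) := by fun_prop
      simpa using (hcont.tendsto 0).mono_left nhdsWithin_le_nhds
    refine ge_of_tendsto hlim ?_
    filter_upwards [self_mem_nhdsWithin] with δ hδ
    rw [← hf_eq]
    exact (hf _ ⟨x, hx, fun j => lt_add_of_pos_right _ hδ⟩).le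

theorem exists_lagrange_multipliers_of_slater {X : Set E} {g : J → E → ℝ} {h : E → ℝ} {M : ℝ}
    (hg : ∀ j, ConvexOn ℝ X (g j)) (hh : ConcaveOn ℝ X h)
    (hM : ∀ x ∈ X, (∀ j, g j x ≤ 0) → h x ≤ M)
    {x₀ : E} (hx₀ : x₀ ∈ X) (hslater : ∀ j, g j x₀ < 0) :
    ∃ lam : J → ℝ, (∀ j, 0 ≤ lam j) ∧ ∀ x ∈ X, h x ≤ M + ∑ j, lam j * g j x := by
  let G : Option J → E → ℝ := fun o => o.elim (fun x => M - h x) g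
  have hG : ∀ o, ConvexOn ℝ X (G o)
    | none => (convexOn_const M hh.1).sub hh
    | some j => hg j
  have hGpos (x) (hx : x ∈ X) : ∃ o, 0 ≤ G o x := by
    by_contra! hneg
    exact (sub_neg.1 (hneg none)).not_ge (hM x hx fun j => (hneg (some j)).le)
  obtain ⟨lam, hlam, hne, hsum⟩ :=
    exists_nonneg_ne_zero_forall_sum_mul_nonneg ⟨x₀, hx₀⟩ hG hGpos
  simp only [Fintype.sum_option, G, Option.elim] at hsum
  have hnone : 0 < lam none := by
    refine (hlam none).lt_of_ne' fun hzero => hne ?_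
    have hterm (j) (_ : j ∈ Finset.univ) : lam (some j) * g j x₀ ≤ 0 :=
      mul_nonpos_of_nonneg_of_nonpos (hlam _) (hslater j).le
    have hsum₀ : ∑ j, lam (some j) * g j x₀ = 0 :=
      (Finset.sum_nonpos hterm).antisymm (by simpa [hzero] using hsum x₀ hx₀)
    ext (_ | j)
    · exact hzero
    · exact (mul_eq_zero.1 ((Finset.sum_eq_zero_iff_of_nonpos hterm).1 hsum₀ j
        (Finset.mem_univ j))).resolve_right (hslater j).ne
  refine ⟨fun j => lam (some j) / lam none, fun j => div_nonneg (hlam _) (hlam _),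
    fun x hx => ?_⟩
  have hdiv : lam none * ∑ j, lam (some j) / lam none * g j x = ∑ j, lam (some j) * g j x := by
    rw [Finset.mul_sum]
    exact Finset.sum_congr rfl fun j _ => by field_simp
  refine le_of_mul_le_mul_left ?_ hnone
  linarith [hsum x hx]

theorem trace_mul_vecMulVec_self {R m : Type*} [CommSemiring R] [Fintype m]
    (M : Matrix m m R) (x : m → R) : (M * vecMulVec x x).trace = x ⬝ᵥ M *ᵥ x := by
  rw [mul_vecMulVec, trace_vecMulVec, dotProduct_comm]

theorem posSemidef_of_forall_le_trace_mul {m : Type*} [Fintype m] {M : Matrix m m ℝ}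
    (hM : M.IsHermitian) {c : ℝ} (hc : ∀ W : Matrix m m ℝ, W.PosSemidef → c ≤ (M * W).trace) :
    M.PosSemidef := by
  refine PosSemidef.of_dotProduct_mulVec_nonneg hM fun x => ?_
  refine nonneg_of_forall_add_mul_nonneg (c := -c) fun r hr => ?_
  have hW : (r • vecMulVec x x).PosSemidef :=
    (posSemidef_vecMulVec_self_star x).smul hr
  have hle := hc _ hW
  rw [Matrix.mul_smul, trace_smul, trace_mul_vecMulVec_self, smul_eq_mul] at hle
  rw [star_trivial]
  linarith

theorem exists_sdp_dual_certificate {m : Type*} [Fintype m] {A : J → Matrix m m ℝ}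
    {C : Matrix m m ℝ} {T : Set (J → ℝ)} {M : ℝ} (hA : ∀ j, (A j).IsHermitian)
    (hC : C.IsHermitian) (hT : Convex ℝ T) (hTpos : ∃ t ∈ T, ∀ j, 0 < t j)
    (hM : ∀ W : Matrix m m ℝ, W.PosSemidef → ∀ t ∈ T, (∀ j, (A j * W).trace ≤ t j) →
      (C * W).trace ≤ M) :
    ∃ lam : J → ℝ, (∀ j, 0 ≤ lam j) ∧ (∑ j, lam j • A j - C).PosSemidef ∧
      ∀ t ∈ T, ∑ j, lam j * t j ≤ M := by
  obtain ⟨t₀, ht₀, ht₀pos⟩ := hTpos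
  let X : Set (Matrix m m ℝ × (J → ℝ)) := {p | p.1.PosSemidef ∧ p.2 ∈ T}
  have hX : Convex ℝ X :=
    fun p hp r hr a b ha hb hab =>
      ⟨(hp.1.smul ha).add (hr.1.smul hb), hT hp.2 hr.2 ha hb hab⟩
  let g : J → Matrix m m ℝ × (J → ℝ) → ℝ := fun j p => (A j * p.1).trace - p.2 j
  have hg (j) : ConvexOn ℝ X (g j) := by
    refine ⟨hX, fun p _ r _ a b _ _ _ => le_of_eq ?_⟩
    simp only [g, Prod.fst_add, Prod.smul_fst, Prod.snd_add, Prod.smul_snd, Pi.add_apply,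
      Pi.smul_apply, Matrix.mul_add, Matrix.mul_smul, trace_add, trace_smul, smul_eq_mul]
    ring
  have hh : ConcaveOn ℝ X fun p => (C * p.1).trace := by
    refine ⟨hX, fun p _ r _ a b _ _ _ => le_of_eq ?_⟩
    simp only [Prod.fst_add, Prod.smul_fst, Matrix.mul_add, Matrix.mul_smul, trace_add,
      trace_smul]
  obtain ⟨lam, hlam, hbound⟩ := exists_lagrange_multipliers_of_slater hg hh
    (fun p hp hle => hM p.1 hp.1 p.2 hp.2 fun j => sub_nonpos.1 (hle j))
    (x₀ := (0, t₀)) ⟨PosSemidef.zero, ht₀⟩ (fun j => by simpa [g] using ht₀pos j)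
  have hlagrange (W : Matrix m m ℝ) (hW : W.PosSemidef) (t) (ht : t ∈ T) :
      ∑ j, lam j * t j - M ≤ ((∑ j, lam j • A j - C) * W).trace := by
    have hle := hbound (W, t) ⟨hW, ht⟩
    simp only [g, mul_sub, Finset.sum_sub_distrib] at hle
    simp only [Matrix.sub_mul, Matrix.sum_mul, Matrix.smul_mul, trace_sub, trace_sum,
      trace_smul, smul_eq_mul]
    linarith
  refine ⟨lam, hlam, ?_, fun t ht => ?_⟩
  · refine posSemidef_of_forall_le_trace_mul (.sub ?_ hC) fun W hW => hlagrange W hW t₀ ht₀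
    exact isSelfAdjoint_sum _ fun j _ => (hA j).smul (IsSelfAdjoint.all _)
  · simpa using hlagrange 0 PosSemidef.zero t ht

end Duality

section UnifProb

variable {Ω : Type*} [Fintype Ω]

/-- The uniform probability of an event `E` in a finite sample space `Ω` (it is `0` if `Ω` is
empty). -/
def unifProb (E : Set Ω) : ℝ :=
  𝔼 ω, E.indicator 1 ω

theorem unifProb_mono {E F : Set Ω} (h : E ⊆ F) : unifProb E ≤ unifProb F :=
  Finset.expect_le_expect fun ω _ =>
    Set.indicator_le_indicator_of_subset h (fun _ => zero_le_one) ω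

theorem unifProb_iUnion_le {κ : Type*} [Fintype κ] (E : κ → Set Ω) :
    unifProb (⋃ k, E k) ≤ ∑ k, unifProb (E k) := by
  simp only [unifProb]
  rw [← Finset.expect_sum_comm]
  refine Finset.expect_le_expect fun ω _ => ?_
  have hnonneg (k) (_ : k ∈ Finset.univ) : 0 ≤ (E k).indicator (1 : Ω → ℝ) ω :=
    Set.indicator_nonneg (fun _ _ => zero_le_one) ω
  by_cases hω : ω ∈ ⋃ k, E k
  · obtain ⟨k, hk⟩ := Set.mem_iUnion.1 hω
    rw [Set.indicator_of_mem hω, ← Set.indicator_of_mem hk 1]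
    exact Finset.single_le_sum hnonneg (Finset.mem_univ k)
  · rw [Set.indicator_of_notMem hω]
    exact Finset.sum_nonneg hnonneg

theorem unifProb_union_le (E F : Set Ω) : unifProb (E ∪ F) ≤ unifProb E + unifProb F := by
  simpa [Set.union_eq_iUnion] using unifProb_iUnion_le fun b : Bool => bif b then E else F

theorem mul_unifProb_le_expect {E : Set Ω} {f : Ω → ℝ} {α : ℝ} (hf : ∀ ω, 0 ≤ f ω)
    (hE : ∀ ω ∈ E, α ≤ f ω) : α * unifProb E ≤ 𝔼 ω, f ω := by
  rw [unifProb, Finset.mul_expect]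
  refine Finset.expect_le_expect fun ω _ => ?_
  by_cases hω : ω ∈ E
  · simpa [hω] using hE ω hω
  · simpa [hω] using hf ω

end UnifProb

section RandomSigns

open Finset

variable {ι : Type*}

/-- The sign pattern `ε`, encoded with values in `ℤˣ = {1, -1}`, as a real vector. -/
def signVec (ε : ι → ℤˣ) : ι → ℝ :=
  fun i => ((ε i : ℤ) : ℝ)

theorem signVec_sq (ε : ι → ℤˣ) (i : ι) : signVec ε i ^ 2 = 1 := by
  rcases Int.units_eq_one_or (ε i) with h | h <;> simp [signVec, h]

/-- The partial Rademacher sum `∑_{i ∈ s} a_i ε_i`, a random variable of the signs `ε`. -/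
def rademacherSum (s : Finset ι) (a : ι → ℝ) (ε : ι → ℤˣ) : ℝ :=
  ∑ i ∈ s, a i * signVec ε i

theorem rademacherSum_neg (s : Finset ι) (a : ι → ℝ) (ε : ι → ℤˣ) :
    rademacherSum s a (-ε) = -rademacherSum s a ε := by
  simp [rademacherSum, signVec]

variable [Fintype ι] [DecidableEq ι]

theorem expect_comp_neg_rademacherSum (s : Finset ι) (a : ι → ℝ) (F : ℝ → ℝ) :
    𝔼 ε : ι → ℤˣ, F (-rademacherSum s a ε) = 𝔼 ε : ι → ℤˣ, F (rademacherSum s a ε) := by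
  have hneg : Function.Involutive fun ε : ι → ℤˣ => -ε := neg_neg
  refine Fintype.expect_equiv hneg.toPerm _ _ fun ε => ?_
  rw [hneg.coe_toPerm, rademacherSum_neg]

theorem expect_comp_rademacherSum_insert {s : Finset ι} {i : ι} (hi : i ∉ s) (a : ι → ℝ)
    (F : ℝ → ℝ) :
    𝔼 ε : ι → ℤˣ, F (rademacherSum (insert i s) a ε) =
      (𝔼 ε : ι → ℤˣ, F (a i + rademacherSum s a ε) +
        𝔼 ε : ι → ℤˣ, F (-a i + rademacherSum s a ε)) / 2 := by
  have hflip : Function.Involutive fun ε : ι → ℤˣ => Function.update ε i (-ε i) := fun ε => by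
    simp
  have hsum (ε : ι → ℤˣ) : rademacherSum s a (Function.update ε i (-ε i)) =
      rademacherSum s a ε := by
    refine sum_congr rfl fun j hj => ?_
    rw [signVec, signVec, Function.update_of_ne (ne_of_mem_of_not_mem hj hi)]
  have hflipped : 𝔼 ε : ι → ℤˣ, F (rademacherSum (insert i s) a ε) =
      𝔼 ε : ι → ℤˣ, F (-(a i * signVec ε i) + rademacherSum s a ε) := by
    refine (Fintype.expect_equiv hflip.toPerm _ _ fun ε => ?_).symm
    rw [hflip.coe_toPerm, ← hsum ε, rademacherSum.eq_1 (insert i s), sum_insert hi]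
    simp [signVec, rademacherSum]
  have hpair : 𝔼 ε : ι → ℤˣ, F (rademacherSum (insert i s) a ε) +
      𝔼 ε : ι → ℤˣ, F (rademacherSum (insert i s) a ε) =
      𝔼 ε : ι → ℤˣ, F (a i + rademacherSum s a ε) +
        𝔼 ε : ι → ℤˣ, F (-a i + rademacherSum s a ε) := by
    conv_lhs => enter [1]; rw [hflipped]
    rw [← expect_add_distrib, ← expect_add_distrib]
    refine expect_congr rfl fun ε _ => ?_
    rw [rademacherSum.eq_1 (insert i s), sum_insert hi, ← rademacherSum]
    rcases Int.units_eq_one_or (ε i) with h | h <;> simp [signVec, h, add_comm]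
  linarith

theorem expect_add_rademacherSum_sq (s : Finset ι) (a : ι → ℝ) (x : ℝ) :
    𝔼 ε : ι → ℤˣ, (x + rademacherSum s a ε) ^ 2 = x ^ 2 + ∑ i ∈ s, a i ^ 2 := by
  induction s using Finset.induction_on generalizing x with
  | empty => simp [rademacherSum]
  | insert i s hi ih =>
    rw [expect_comp_rademacherSum_insert hi a fun y => (x + y) ^ 2, sum_insert hi]
    simp only [← add_assoc, ih]
    ring

theorem expect_exp_rademacherSum (s : Finset ι) (a : ι → ℝ) :
    𝔼 ε : ι → ℤˣ, Real.exp (rademacherSum s a ε) = ∏ i ∈ s, Real.cosh (a i) := by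
  induction s using Finset.induction_on with
  | empty => simp [rademacherSum]
  | insert i s hi ih =>
    rw [expect_comp_rademacherSum_insert hi, prod_insert hi, Real.cosh_eq, ← ih]
    simp only [Real.exp_add, ← mul_expect]
    ring

theorem one_sub_div_sq_le_unifProb_abs_rademacherSum_le (s : Finset ι) (a : ι → ℝ) {r : ℝ}
    (hr : 0 < r) :
    1 - (∑ i ∈ s, a i ^ 2) / r ^ 2 ≤ unifProb {ε : ι → ℤˣ | |rademacherSum s a ε| ≤ r} := by
  have hmoment := expect_add_rademacherSum_sq s a 0
  simp only [zero_add, ne_eq, two_ne_zero, not_false_eq_true, zero_pow] at hmoment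
  rw [← hmoment, ← Fintype.expect_const (ι := ι → ℤˣ) (1 : ℝ), expect_div,
    ← expect_sub_distrib]
  refine expect_le_expect fun ε _ => ?_
  by_cases hε : |rademacherSum s a ε| ≤ r
  · rw [Set.indicator_of_mem (by exact hε), Pi.one_apply, sub_le_self_iff]
    positivity
  · rw [Set.indicator_of_notMem (by exact hε), sub_nonpos, one_le_div (by positivity),
      ← sq_abs (rademacherSum s a ε)]
    gcongr
    exact (not_le.1 hε).le

theorem abs_add_le_one_or_abs_sub_le_one {x y : ℝ} (hx : |x| ≤ 1) (hy : |y| ≤ 1 + |x|) :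
    |x + y| ≤ 1 ∨ |x - y| ≤ 1 := by
  simp only [abs_le] at hx hy ⊢
  rcases abs_cases x with ⟨h, _⟩ | ⟨h, _⟩ <;> rw [h] at hy <;> rcases le_total 0 y with h0 | h0
  · right; constructor <;> linarith
  · left; constructor <;> linarith
  · left; constructor <;> linarith
  · right; constructor <;> linarith

theorem unifProb_abs_rademacherSum_le_one_add_abs (s : Finset ι) (a : ι → ℝ) {x : ℝ}
    (hx : |x| ≤ 1) :
    unifProb {ε : ι → ℤˣ | |rademacherSum s a ε| ≤ 1 + |x|} ≤
      2 * unifProb {ε : ι → ℤˣ | |x + rademacherSum s a ε| ≤ 1} := by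
  have hsymm : unifProb {ε : ι → ℤˣ | |x - rademacherSum s a ε| ≤ 1} =
      unifProb {ε : ι → ℤˣ | |x + rademacherSum s a ε| ≤ 1} :=
    expect_comp_neg_rademacherSum s a ({y | |x + y| ≤ 1}.indicator 1)
  calc _ ≤ unifProb ({ε : ι → ℤˣ | |x + rademacherSum s a ε| ≤ 1} ∪
          {ε : ι → ℤˣ | |x - rademacherSum s a ε| ≤ 1}) :=
        unifProb_mono fun _ hε => abs_add_le_one_or_abs_sub_le_one hx hε
    _ ≤ _ := unifProb_union_le _ _
    _ = _ := by rw [hsymm, two_mul]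

theorem unifProb_rademacherSum_insert {s : Finset ι} {i : ι} (hi : i ∉ s) (a : ι → ℝ)
    (B : Set ℝ) :
    unifProb {ε : ι → ℤˣ | rademacherSum (insert i s) a ε ∈ B} =
      (unifProb {ε : ι → ℤˣ | a i + rademacherSum s a ε ∈ B} +
        unifProb {ε : ι → ℤˣ | -a i + rademacherSum s a ε ∈ B}) / 2 :=
  expect_comp_rademacherSum_insert hi a (B.indicator 1)

-- While `x + a i` and `x - a i` both stay in `[-1, 1]`, condition on the sign of `i`. Otherwise
-- `1 + |x| > 2 - m`, which is large enough for Chebyshev's inequality to place the sum `y` in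
-- `[-1 - |x|, 1 + |x|]` with probability at least `2 / 3`. One of `x + y` and `x - y` then lies in
-- `[-1, 1]`, and both are equally likely to do so by symmetry.
theorem one_third_le_unifProb_abs_add_rademacherSum_le_one (s : Finset ι) (a : ι → ℝ) {m x : ℝ}
    (ha : ∀ i ∈ s, |a i| ≤ m) (hm : m ^ 2 + ∑ i ∈ s, a i ^ 2 ≤ 1) (hx : |x| ≤ 1) :
    1 / 3 ≤ unifProb {ε : ι → ℤˣ | |x + rademacherSum s a ε| ≤ 1} := by
  induction s using Finset.induction_on generalizing x with
  | empty =>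
    simp only [unifProb, rademacherSum, sum_empty, add_zero, hx, Set.ofPred_true,
      Set.indicator_univ, Pi.one_apply, Fintype.expect_const]
    norm_num
  | insert i s hi ih =>
    by_cases hxi : |x| + |a i| ≤ 1
    · have ha' (j) (hj : j ∈ s) : |a j| ≤ m := ha j (mem_insert_of_mem hj)
      have hm' : m ^ 2 + ∑ j ∈ s, a j ^ 2 ≤ 1 := by
        rw [sum_insert hi] at hm
        linarith [sq_nonneg (a i)]
      have hplus := ih ha' hm' (x := x + a i) ((abs_add_le _ _).trans hxi)
      have hminus := ih ha' hm' (x := x + -a i) ((abs_add_le _ _).trans (by rwa [abs_neg]))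
      have hsplit := unifProb_rademacherSum_insert hi a {y | |x + y| ≤ 1}
      simp only [Set.mem_ofPred_eq, ← add_assoc] at hsplit
      linarith
    · have hcheb := one_sub_div_sq_le_unifProb_abs_rademacherSum_le (insert i s) a
        (r := 1 + |x|) (by positivity)
      have hfold := unifProb_abs_rademacherSum_le_one_add_abs (insert i s) a hx
      have hratio : (∑ j ∈ insert i s, a j ^ 2) / (1 + |x|) ^ 2 ≤ 1 / 3 := by
        have hmi := ha i (mem_insert_self i s)
        have hsum : 0 ≤ ∑ j ∈ insert i s, a j ^ 2 := sum_nonneg fun _ _ => sq_nonneg _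
        have hm1 : m ≤ 1 := by nlinarith
        have hsq : (2 - m) ^ 2 ≤ (1 + |x|) ^ 2 := by
          gcongr
          · linarith
          · linarith
        rw [div_le_iff₀ (by positivity)]
        -- `3 (1 - m ^ 2) ≤ (2 - m) ^ 2` because the difference is `(2 m - 1) ^ 2`
        nlinarith [sq_nonneg (2 * m - 1)]
      linarith

theorem one_third_le_unifProb_abs_dotProduct_signVec_le_one (a : ι → ℝ)
    (ha : ∑ i, a i ^ 2 ≤ 1) : 1 / 3 ≤ unifProb {ε : ι → ℤˣ | |a ⬝ᵥ signVec ε| ≤ 1} := by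
  change 1 / 3 ≤ unifProb {ε : ι → ℤˣ | |rademacherSum univ a ε| ≤ 1}
  rcases isEmpty_or_nonempty ι with hι | hι
  · simpa using one_third_le_unifProb_abs_add_rademacherSum_le_one univ a (m := 0) (x := 0)
      (by simp) (by simp) (by simp)
  · obtain ⟨i, hi⟩ := Finite.exists_max fun i => |a i|
    have hm : |a i| ^ 2 + ∑ j ∈ univ.erase i, a j ^ 2 ≤ 1 := by
      rwa [sq_abs, add_sum_erase univ (fun j => a j ^ 2) (mem_univ i)]
    have h1 : |a i| ≤ 1 := by
      refine (sq_le_one_iff₀ (abs_nonneg _)).1 ?_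
      linarith [sum_nonneg fun j (_ : j ∈ univ.erase i) => sq_nonneg (a j)]
    have hplus := one_third_le_unifProb_abs_add_rademacherSum_le_one _ a
      (fun j _ => hi j) hm h1
    have hminus := one_third_le_unifProb_abs_add_rademacherSum_le_one _ a
      (fun j _ => hi j) hm (x := -a i) (by rwa [abs_neg])
    have hsplit := unifProb_rademacherSum_insert (notMem_erase i univ) a {y | |y| ≤ 1}
    simp only [insert_erase (mem_univ i), Set.mem_ofPred_eq] at hsplit
    linarith

end RandomSigns

section Chaos

open Finset MeasureTheory

theorem exp_neg_sq_div_add_mul_eq {θ : ℝ} (hθ : θ ≠ 0) (x y : ℝ) :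
    Real.exp (-(1 / (4 * θ)) * y ^ 2 + y * x) =
      Real.exp (-(1 / (4 * θ)) * (y - 2 * θ * x) ^ 2) * Real.exp (θ * x ^ 2) := by
  rw [← Real.exp_add]
  congr 1
  field_simp
  ring

theorem integrable_exp_neg_sq_div_add_mul {θ : ℝ} (hθ : 0 < θ) (x : ℝ) :
    Integrable fun y : ℝ => Real.exp (-(1 / (4 * θ)) * y ^ 2 + y * x) := by
  simp only [exp_neg_sq_div_add_mul_eq hθ.ne']
  exact ((integrable_exp_neg_mul_sq (by positivity)).comp_sub_right _).mul_const _

theorem integral_exp_neg_sq_div_add_mul {θ : ℝ} (hθ : 0 < θ) (x : ℝ) :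
    ∫ y : ℝ, Real.exp (-(1 / (4 * θ)) * y ^ 2 + y * x) =
      √(Real.pi / (1 / (4 * θ))) * Real.exp (θ * x ^ 2) := by
  simp only [exp_neg_sq_div_add_mul_eq hθ.ne']
  rw [integral_mul_const,
    integral_sub_right_eq_self fun y => Real.exp (-(1 / (4 * θ)) * y ^ 2), integral_gaussian]

theorem integrable_expect {Ω : Type*} [Fintype Ω] {α : Type*} {mα : MeasurableSpace α}
    {μ : Measure α} {f : Ω → α → ℝ} (hf : ∀ ω, Integrable (f ω) μ) :
    Integrable (fun y => 𝔼 ω, f ω y) μ := by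
  simp only [Fintype.expect_eq_sum_div_card]
  exact (integrable_finsetSum univ fun ω _ => hf ω).div_const _

theorem integral_expect {Ω : Type*} [Fintype Ω] {α : Type*} {mα : MeasurableSpace α}
    {μ : Measure α} {f : Ω → α → ℝ} (hf : ∀ ω, Integrable (f ω) μ) :
    ∫ y, 𝔼 ω, f ω y ∂μ = 𝔼 ω, ∫ y, f ω y ∂μ := by
  simp only [Fintype.expect_eq_sum_div_card]
  rw [integral_div, integral_finsetSum univ fun ω _ => hf ω]

variable {ι : Type*} [Fintype ι] [DecidableEq ι]

theorem expect_exp_dotProduct_signVec_le (a : ι → ℝ) :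
    𝔼 ε : ι → ℤˣ, Real.exp (a ⬝ᵥ signVec ε) ≤ Real.exp ((a ⬝ᵥ a) / 2) :=
  calc 𝔼 ε : ι → ℤˣ, Real.exp (a ⬝ᵥ signVec ε) = ∏ i, Real.cosh (a i) :=
        expect_exp_rademacherSum univ a
    _ ≤ ∏ i, Real.exp (a i ^ 2 / 2) :=
        prod_le_prod (fun _ _ => (Real.cosh_pos _).le) fun _ _ => Real.cosh_le_exp_half_sq _
    _ = Real.exp ((a ⬝ᵥ a) / 2) := by
        simp only [← Real.exp_sum, ← sum_div, sq, dotProduct]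

-- `exp (θ x ^ 2)` is, up to normalization, the integral of `exp (y x)` against the Gaussian
-- weight `exp (-y ^ 2 / (4 θ))`, and `a ⬝ᵥ ε` is sub-Gaussian.
theorem expect_exp_mul_sq_dotProduct_signVec_le (a : ι → ℝ) {θ : ℝ} (hθ : 0 < θ)
    (ha : 2 * θ * (a ⬝ᵥ a) < 1) :
    𝔼 ε : ι → ℤˣ, Real.exp (θ * (a ⬝ᵥ signVec ε) ^ 2) ≤ (√(1 - 2 * θ * (a ⬝ᵥ a)))⁻¹ := by
  have hpos : 0 < 1 / (4 * θ) - (a ⬝ᵥ a) / 2 := by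
    rw [sub_pos, lt_div_iff₀ (by positivity)]
    linarith
  have hpoint (y : ℝ) :
      𝔼 ε : ι → ℤˣ, Real.exp (-(1 / (4 * θ)) * y ^ 2 + y * (a ⬝ᵥ signVec ε)) ≤
        Real.exp (-(1 / (4 * θ) - (a ⬝ᵥ a) / 2) * y ^ 2) := by
    have hmgf := expect_exp_dotProduct_signVec_le (y • a)
    simp only [smul_dotProduct, dotProduct_smul, smul_eq_mul] at hmgf
    simp only [Real.exp_add, ← mul_expect]
    refine (mul_le_mul_of_nonneg_left hmgf (Real.exp_pos _).le).trans_eq ?_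
    rw [← Real.exp_add]
    ring_nf
  have hintegrable (ε : ι → ℤˣ) := integrable_exp_neg_sq_div_add_mul hθ (a ⬝ᵥ signVec ε)
  have hintegral := integral_mono (integrable_expect hintegrable)
    (integrable_exp_neg_mul_sq hpos) hpoint
  simp only [integral_expect hintegrable, integral_exp_neg_sq_div_add_mul hθ, ← mul_expect,
    integral_gaussian] at hintegral
  have hnormalization : √(Real.pi / (1 / (4 * θ) - (a ⬝ᵥ a) / 2)) =
      √(Real.pi / (1 / (4 * θ))) * (√(1 - 2 * θ * (a ⬝ᵥ a)))⁻¹ := by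
    have hfactor : 1 / (4 * θ) - (a ⬝ᵥ a) / 2 = 1 / (4 * θ) * (1 - 2 * θ * (a ⬝ᵥ a)) := by
      field_simp
      ring
    rw [hfactor, ← div_div, div_eq_mul_inv _ (1 - _), Real.sqrt_mul (by positivity),
      Real.sqrt_inv]
  rw [hnormalization] at hintegral
  exact le_of_mul_le_mul_left hintegral (by positivity)

theorem exists_vecMulVec_self_eq_smul_vecMulVec_self {m : Type*} [Fintype m] (v : m → ℝ) {c : ℝ}
    (hc : 0 < c) : ∃ u, u ⬝ᵥ u ≤ c ∧ vecMulVec v v = (v ⬝ᵥ v / c) • vecMulVec u u := by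
  by_cases hv : v = 0
  · exact ⟨0, by simpa using hc.le, by simp [hv]⟩
  have hne : v ⬝ᵥ v ≠ 0 := dotProduct_self_eq_zero.not.2 hv
  have hroot : √(c / (v ⬝ᵥ v)) * √(c / (v ⬝ᵥ v)) = c / (v ⬝ᵥ v) :=
    Real.mul_self_sqrt (div_nonneg hc.le (dotProduct_self_star_nonneg v))
  refine ⟨√(c / (v ⬝ᵥ v)) • v, le_of_eq ?_, ?_⟩
  · rw [smul_dotProduct, dotProduct_smul, smul_smul, hroot, smul_eq_mul, div_mul_cancel₀ _ hne]
  · rw [vecMulVec_smul, smul_vecMulVec, smul_smul, smul_smul, mul_assoc, hroot,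
      div_mul_div_cancel₀ hc.ne', div_self hne, one_smul]

theorem mem_convexHull_vecMulVec_self_of_posSemidef {m : Type*} [Fintype m] {M : Matrix m m ℝ}
    (hM : M.PosSemidef) :
    M ∈ convexHull ℝ {W : Matrix m m ℝ | ∃ u, u ⬝ᵥ u ≤ M.trace ∧ W = vecMulVec u u} := by
  obtain ⟨N, v, hv⟩ := posSemidef_iff_eq_sum_vecMulVec.1 hM
  simp only [star_trivial] at hv
  have htrace : M.trace = ∑ j, v j ⬝ᵥ v j := by
    simp only [hv, trace_sum, trace_vecMulVec]
  rcases hM.trace_nonneg.eq_or_lt with hzero | hpos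
  · rw [hM.trace_eq_zero_iff.1 hzero.symm]
    exact subset_convexHull _ _ ⟨0, by simp⟩
  choose u hu huv using fun j => exists_vecMulVec_self_eq_smul_vecMulVec_self (v j) hpos
  have hweights : ∑ j, v j ⬝ᵥ v j / M.trace = 1 := by
    rw [← sum_div, ← htrace, div_self hpos.ne']
  have hmem := (convex_convexHull ℝ _).sum_mem
    (fun j _ => div_nonneg (dotProduct_self_star_nonneg (v j)) hpos.le) hweights
    fun j _ => subset_convexHull ℝ
      {W : Matrix m m ℝ | ∃ u, u ⬝ᵥ u ≤ M.trace ∧ W = vecMulVec u u} ⟨u j, hu j, rfl⟩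
  simpa only [star_trivial, ← huv, ← hv] using hmem

theorem convexOn_expect_exp_quadraticForm_signVec (θ : ℝ) :
    ConvexOn ℝ Set.univ fun M : Matrix ι ι ℝ =>
      𝔼 ε : ι → ℤˣ, Real.exp (θ * (signVec ε ⬝ᵥ M *ᵥ signVec ε)) := by
  refine ⟨convex_univ, fun M _ N _ a b ha hb hab => ?_⟩
  simp only [smul_eq_mul, mul_expect, ← expect_add_distrib]
  refine expect_le_expect fun ε _ => ?_
  refine le_of_eq_of_le (congrArg Real.exp ?_) (convexOn_exp.2
    (Set.mem_univ (θ * (signVec ε ⬝ᵥ M *ᵥ signVec ε)))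
    (Set.mem_univ (θ * (signVec ε ⬝ᵥ N *ᵥ signVec ε))) ha hb hab)
  simp only [add_mulVec, smul_mulVec, dotProduct_add, dotProduct_smul, smul_eq_mul]
  ring_nf

theorem expect_exp_mul_quadraticForm_signVec_le {M : Matrix ι ι ℝ} (hM : M.PosSemidef) {θ : ℝ}
    (hθ : 0 < θ) (htrace : 2 * θ * M.trace < 1) :
    𝔼 ε : ι → ℤˣ, Real.exp (θ * (signVec ε ⬝ᵥ M *ᵥ signVec ε)) ≤
      (√(1 - 2 * θ * M.trace))⁻¹ := by
  refine (convexHull_min ?_ ((convexOn_expect_exp_quadraticForm_signVec θ).convex_le _)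
    (mem_convexHull_vecMulVec_self_of_posSemidef hM)).2
  rintro _ ⟨u, hu, rfl⟩
  have hle : 2 * θ * (u ⬝ᵥ u) ≤ 2 * θ * M.trace := by gcongr
  have hsq (ε : ι → ℤˣ) :
      signVec ε ⬝ᵥ vecMulVec u u *ᵥ signVec ε = (u ⬝ᵥ signVec ε) ^ 2 := by
    simp [vecMulVec_mulVec, sq, dotProduct_comm]
  simp only [hsq, Set.mem_ofPred_eq, Set.mem_univ, true_and]
  refine (expect_exp_mul_sq_dotProduct_signVec_le u hθ (hle.trans_lt htrace)).trans ?_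
  gcongr

theorem unifProb_lt_quadraticForm_signVec_le {M : Matrix ι ι ℝ} (hM : M.PosSemidef) {c α : ℝ}
    (hc : M.trace ≤ c) (hα : 0 < α) :
    unifProb {ε : ι → ℤˣ | 3 * Real.log α * c < signVec ε ⬝ᵥ M *ᵥ signVec ε} ≤ √3 / α := by
  rcases (hM.trace_nonneg.trans hc).eq_or_lt with rfl | hcpos
  · have hzero : M = 0 := hM.trace_eq_zero_iff.1 (hc.antisymm hM.trace_nonneg)
    simp only [hzero, zero_mulVec, dotProduct_zero, mul_zero, lt_self_iff_false,
      Set.ofPred_false, unifProb, Set.indicator_empty, expect_const_zero]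
    positivity
  have htrace : 2 * (1 / (3 * c)) * M.trace ≤ 2 / 3 := by
    rw [mul_one_div, div_mul_eq_mul_div, div_le_div_iff₀ (by positivity) (by norm_num)]
    linarith
  have hsqrt : (√(1 - 2 * (1 / (3 * c)) * M.trace))⁻¹ ≤ √3 := by
    rw [← Real.sqrt_inv]
    exact Real.sqrt_le_sqrt (inv_le_of_inv_le₀ (by norm_num) (by linarith))
  rw [le_div_iff₀' hα]
  refine (mul_unifProb_le_expect (fun ε => (Real.exp_pos _).le) fun ε hε => ?_).trans
    ((expect_exp_mul_quadraticForm_signVec_le hM (θ := 1 / (3 * c)) (by positivity)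
      (by linarith)).trans hsqrt)
  rw [← Real.log_le_iff_le_exp hα, one_div_mul_eq_div, le_div_iff₀ (by positivity)]
  linarith [Set.mem_ofPred_eq ▸ hε]

end Chaos

section Rounding

theorem exists_signVec_forall_quadraticForm_le {ι κ : Type*} [Fintype ι] [Fintype κ] [Nonempty κ]
    {a : ι → ℝ} (ha : ∑ i, a i ^ 2 ≤ 1) {M : κ → Matrix ι ι ℝ} (hM : ∀ k, (M k).PosSemidef)
    {c : κ → ℝ} (hc : ∀ k, (M k).trace ≤ c k) :
    ∃ ε : ι → ℤˣ, |a ⬝ᵥ signVec ε| ≤ 1 ∧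
      ∀ k, signVec ε ⬝ᵥ M k *ᵥ signVec ε ≤ 3 * Real.log (6 * Fintype.card κ) * c k := by
  classical
  by_contra! hcon
  have hbad (k : κ) := unifProb_lt_quadraticForm_signVec_le (hM k) (hc k)
    (show (0 : ℝ) < 6 * Fintype.card κ by positivity)
  have hsub : {ε : ι → ℤˣ | |a ⬝ᵥ signVec ε| ≤ 1} ⊆ ⋃ k, {ε : ι → ℤˣ |
      3 * Real.log (6 * Fintype.card κ) * c k < signVec ε ⬝ᵥ M k *ᵥ signVec ε} :=
    fun ε hε => Set.mem_iUnion.2 (hcon ε hε)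
  have hthird : (1 / 3 : ℝ) ≤ √3 / 6 :=
    calc (1 / 3 : ℝ) ≤ unifProb {ε : ι → ℤˣ | |a ⬝ᵥ signVec ε| ≤ 1} :=
          one_third_le_unifProb_abs_dotProduct_signVec_le_one a ha
      _ ≤ _ := unifProb_mono hsub
      _ ≤ _ := unifProb_iUnion_le _
      _ ≤ ∑ _k : κ, √3 / (6 * Fintype.card κ) := Finset.sum_le_sum fun k _ => hbad k
      _ = √3 / 6 := by
          rw [Finset.sum_const, Finset.card_univ, nsmul_eq_mul]
          field_simp
  have hsqrt : √3 < 2 := by rw [Real.sqrt_lt' two_pos]; norm_num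
  linarith

theorem dotProduct_conj_mulVec {R l m : Type*} [CommSemiring R] [Fintype l] [Fintype m]
    (P : Matrix l m R) (A : Matrix l l R) (z : m → R) :
    z ⬝ᵥ (Pᵀ * A * P) *ᵥ z = (P *ᵥ z) ⬝ᵥ A *ᵥ (P *ᵥ z) := by
  rw [← mulVec_mulVec, ← mulVec_mulVec, dotProduct_mulVec, vecMul_transpose]

variable {m : Type*} [Fintype m]

theorem exists_transpose_mul_self_eq {W : Matrix m m ℝ} (hW : W.PosSemidef) :
    ∃ B : Matrix m m ℝ, W = Bᵀ * B := by
  classical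
  open scoped MatrixOrder in
  obtain ⟨B, hB⟩ := CStarAlgebra.nonneg_iff_eq_star_mul_self.mp hW.nonneg
  exact ⟨B, hB⟩

theorem exists_mul_transpose_eq_and_diagonal [DecidableEq m]
    {W Q : Matrix m m ℝ} (hW : W.PosSemidef) (hQ : Q.IsSymm) :
    ∃ (L : Matrix m m ℝ) (d : m → ℝ), W = L * Lᵀ ∧ Lᵀ * Q * L = diagonal d := by
  obtain ⟨B, rfl⟩ := exists_transpose_mul_self_eq hW
  have hH : (B * Q * Bᵀ).IsHermitian := by
    rw [IsHermitian, conjTranspose_eq_transpose_of_trivial, transpose_mul, transpose_mul,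
      transpose_transpose, hQ.eq, Matrix.mul_assoc]
  let U : Matrix m m ℝ := hH.eigenvectorUnitary
  have hU : U * Uᵀ = 1 := Unitary.coe_mul_star_self hH.eigenvectorUnitary
  have hdiag : Uᵀ * (B * Q * Bᵀ) * U = diagonal hH.eigenvalues := by
    have hspec := hH.conjStarAlgAut_star_eigenvectorUnitary
    rw [Unitary.conjStarAlgAut_apply, Unitary.coe_star, star_star] at hspec
    exact hspec
  refine ⟨Bᵀ * U, hH.eigenvalues, ?_, ?_⟩
  · rw [transpose_mul, transpose_transpose, Matrix.mul_assoc, ← Matrix.mul_assoc U, hU,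
      Matrix.one_mul]
  · rw [← hdiag, transpose_mul, transpose_transpose]
    simp only [Matrix.mul_assoc]

theorem exists_forall_signs_quadraticForm_eq_trace {W Q : Matrix m m ℝ} (hW : W.PosSemidef)
    (hQ : Q.IsSymm) :
    ∃ L : Matrix m m ℝ, W = L * Lᵀ ∧ ∀ e : m → ℝ, (∀ i, e i ^ 2 = 1) →
      (L *ᵥ e) ⬝ᵥ Q *ᵥ (L *ᵥ e) = (Q * W).trace := by
  classical
  obtain ⟨L, d, rfl, hd⟩ := exists_mul_transpose_eq_and_diagonal hW hQ
  refine ⟨L, rfl, fun e he => ?_⟩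
  have hcycle : (Q * (L * Lᵀ)).trace = ∑ i, d i := by
    rw [← Matrix.mul_assoc, trace_mul_cycle, ← trace_diagonal, ← hd]
  rw [← dotProduct_conj_mulVec, hd, hcycle, dotProduct]
  refine Finset.sum_congr rfl fun i _ => ?_
  rw [mulVec_diagonal, mul_left_comm, ← sq, he, mul_one]

theorem exists_quadraticForm_eq_trace {κ : Type*} [Fintype κ] [Nonempty κ] {W Q : Matrix m m ℝ}
    (hW : W.PosSemidef) (hQ : Q.IsSymm) {w : m → ℝ} (hw : w ⬝ᵥ W *ᵥ w ≤ 1)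
    {A : κ → Matrix m m ℝ} (hA : ∀ k, (A k).PosSemidef) {c : κ → ℝ}
    (hc : ∀ k, (A k * W).trace ≤ c k) :
    ∃ y : m → ℝ, |w ⬝ᵥ y| ≤ 1 ∧
      (∀ k, y ⬝ᵥ A k *ᵥ y ≤ 3 * Real.log (6 * Fintype.card κ) * c k) ∧
      y ⬝ᵥ Q *ᵥ y = (Q * W).trace := by
  obtain ⟨L, rfl, hL⟩ := exists_forall_signs_quadraticForm_eq_trace hW hQ
  have hM (k) : (Lᵀ * A k * L).PosSemidef := (hA k).conjTranspose_mul_mul_same L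
  have htrace (k) : (Lᵀ * A k * L).trace ≤ c k := by
    rw [← trace_mul_cycle, Matrix.mul_assoc]
    exact hc k
  have hvar : ∑ i, (Lᵀ *ᵥ w) i ^ 2 ≤ 1 := by
    refine le_of_eq_of_le ?_ hw
    rw [← mulVec_mulVec, dotProduct_mulVec, ← mulVec_transpose]
    simp only [dotProduct, sq]
  obtain ⟨ε, hε, hεA⟩ := exists_signVec_forall_quadraticForm_le hvar hM htrace
  refine ⟨L *ᵥ signVec ε, ?_, fun k => ?_, hL _ (signVec_sq ε)⟩
  · rwa [dotProduct_mulVec, ← mulVec_transpose]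
  · simpa only [dotProduct_conj_mulVec] using hεA k

end Rounding

section Homogenization

variable {m : ℕ}

theorem dotProduct_qPlus_mulVec (Q : Matrix (Fin m) (Fin m) ℝ) (q : Fin m → ℝ)
    (y : Fin m ⊕ Unit → ℝ) :
    y ⬝ᵥ qPlus Q q *ᵥ y = (y ∘ Sum.inl) ⬝ᵥ Q *ᵥ (y ∘ Sum.inl) +
      2 * y (Sum.inr ()) * (q ⬝ᵥ (y ∘ Sum.inl)) := by
  simp only [qPlus, dotProduct, mulVec, Fintype.sum_sum_type, fromBlocks_apply₁₁,
    fromBlocks_apply₁₂, fromBlocks_apply₂₁, fromBlocks_apply₂₂, of_apply, Matrix.zero_apply,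
    Finset.univ_unique, Finset.sum_singleton, PUnit.default_eq_unit, Function.comp_apply, mul_add,
    Finset.sum_add_distrib, zero_mul, mul_zero, add_zero]
  rw [add_assoc, add_right_inj, two_mul, add_mul, Finset.mul_sum, add_right_inj]
  exact Finset.sum_congr rfl fun i _ => by ring

theorem dotProduct_blockDiagOne_mulVec (M : Matrix (Fin m) (Fin m) ℝ) (μ : ℝ)
    (y : Fin m ⊕ Unit → ℝ) :
    y ⬝ᵥ blockDiagOne M μ *ᵥ y =
      (y ∘ Sum.inl) ⬝ᵥ M *ᵥ (y ∘ Sum.inl) + μ * y (Sum.inr ()) ^ 2 := by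
  simp only [blockDiagOne, dotProduct, mulVec, Fintype.sum_sum_type, fromBlocks_apply₁₁,
    fromBlocks_apply₁₂, fromBlocks_apply₂₁, fromBlocks_apply₂₂, of_apply, Matrix.zero_apply,
    Finset.univ_unique, Finset.sum_singleton, PUnit.default_eq_unit, Function.comp_apply,
    zero_mul, add_zero, zero_add, Finset.sum_const_zero]
  ring

theorem isSymm_qPlus {Q : Matrix (Fin m) (Fin m) ℝ} (hQ : Q.IsSymm) (q : Fin m → ℝ) :
    (qPlus Q q).IsSymm :=
  .fromBlocks hQ rfl rfl

theorem isHermitian_blockDiagOne {M : Matrix (Fin m) (Fin m) ℝ} (hM : M.IsHermitian) (μ : ℝ) :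
    (blockDiagOne M μ).IsHermitian :=
  .fromBlocks hM conjTranspose_zero rfl

theorem posSemidef_blockDiagOne {M : Matrix (Fin m) (Fin m) ℝ} (hM : M.PosSemidef) {μ : ℝ}
    (hμ : 0 ≤ μ) : (blockDiagOne M μ).PosSemidef := by
  refine .of_dotProduct_mulVec_nonneg (isHermitian_blockDiagOne hM.1 μ) fun y => ?_
  rw [star_trivial, dotProduct_blockDiagOne_mulVec]
  exact add_nonneg (hM.dotProduct_mulVec_nonneg _) (mul_nonneg hμ (sq_nonneg _))

theorem blockDiagOne_zero_one :
    blockDiagOne (0 : Matrix (Fin m) (Fin m) ℝ) 1 =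
      vecMulVec (Pi.single (Sum.inr ()) 1) (Pi.single (Sum.inr ()) 1) := by
  ext (i | i) (j | j) <;> simp [blockDiagOne, vecMulVec_apply]

theorem smul_blockDiagOne_add_sum_smul {κ : Type*} [Fintype κ]
    (S : κ → Matrix (Fin m) (Fin m) ℝ) (μ : ℝ) (lam : κ → ℝ) :
    μ • blockDiagOne 0 1 + ∑ k, lam k • blockDiagOne (S k) 0 =
      blockDiagOne (∑ k, lam k • S k) μ := by
  ext (i | i) (j | j) <;> simp [blockDiagOne, Matrix.sum_apply]

theorem exists_quadratic_ge_of_abs_le_one {ι : Type*} [Fintype ι] (Q : Matrix ι ι ℝ)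
    (q z : ι → ℝ) {τ : ℝ} (hτ : |τ| ≤ 1) :
    ∃ z', (z' = z ∨ z' = -z) ∧
      z ⬝ᵥ Q *ᵥ z + 2 * τ * (q ⬝ᵥ z) ≤ z' ⬝ᵥ Q *ᵥ z' + 2 * (q ⬝ᵥ z') := by
  have hle : τ * (q ⬝ᵥ z) ≤ |q ⬝ᵥ z| :=
    calc τ * (q ⬝ᵥ z) ≤ |τ| * |q ⬝ᵥ z| := (le_abs_self _).trans_eq (abs_mul _ _)
      _ ≤ |q ⬝ᵥ z| := mul_le_of_le_one_left (abs_nonneg _) hτ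
  rcases abs_choice (q ⬝ᵥ z) with hqz | hqz
  · exact ⟨z, .inl rfl, by linarith⟩
  · refine ⟨-z, .inr rfl, ?_⟩
    simp only [mulVec_neg, dotProduct_neg, neg_dotProduct, neg_neg]
    linarith

theorem trace_qPlus_mul_le {κ : Type*} [Fintype κ] [Nonempty κ]
    {S : κ → Matrix (Fin m) (Fin m) ℝ} (hS : ∀ k, (S k).PosSemidef)
    {Q : Matrix (Fin m) (Fin m) ℝ} (hQ : Q.IsSymm) {q : Fin m → ℝ} {c : κ → ℝ} {M : ℝ}
    (hM : ∀ z, (∀ k, z ⬝ᵥ S k *ᵥ z ≤ 3 * Real.log (6 * Fintype.card κ) * c k) →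
      z ⬝ᵥ Q *ᵥ z + 2 * (q ⬝ᵥ z) ≤ M)
    {W : Matrix (Fin m ⊕ Unit) (Fin m ⊕ Unit) ℝ} (hW : W.PosSemidef)
    (hWone : (blockDiagOne 0 1 * W).trace ≤ 1)
    (hWS : ∀ k, (blockDiagOne (S k) 0 * W).trace ≤ c k) :
    (qPlus Q q * W).trace ≤ M := by
  rw [blockDiagOne_zero_one, trace_mul_comm, trace_mul_vecMulVec_self] at hWone
  obtain ⟨y, hy, hyS, hyQ⟩ := exists_quadraticForm_eq_trace hW (isSymm_qPlus hQ q) hWone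
    (fun k => posSemidef_blockDiagOne (hS k) le_rfl) hWS
  rw [single_one_dotProduct] at hy
  obtain ⟨z, hz, hle⟩ := exists_quadratic_ge_of_abs_le_one Q q (y ∘ Sum.inl) hy
  rw [← hyQ, dotProduct_qPlus_mulVec]
  refine hle.trans (hM z fun k => le_of_eq_of_le ?_ (hyS k))
  rw [dotProduct_blockDiagOne_mulVec, zero_mul, add_zero]
  rcases hz with rfl | rfl
  · rfl
  · simp only [mulVec_neg, dotProduct_neg, neg_dotProduct, neg_neg]

theorem exists_dual_feasible {K : ℕ} {S : Fin K → Matrix (Fin m) (Fin m) ℝ}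
    (hS : ∀ k, (S k).IsHermitian) {T : Set (Fin K → ℝ)} (hT : Convex ℝ T)
    (hTpos : ∃ t ∈ T, ∀ k, 0 < t k) {Q : Matrix (Fin m) (Fin m) ℝ} (hQ : Q.IsSymm)
    {q : Fin m → ℝ} {s M : ℝ} (hs : 0 < s)
    (hM : ∀ W, W.PosSemidef → ∀ t ∈ T, (blockDiagOne 0 1 * W).trace ≤ 1 →
      (∀ k, (blockDiagOne (S k) 0 * W).trace ≤ s * t k) → (qPlus Q q * W).trace ≤ M) :
    ∃ (lam : Fin K → ℝ) (μ : ℝ), (∀ k, 0 ≤ lam k) ∧ 0 ≤ μ ∧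
      (blockDiagOne (∑ k, lam k • S k) μ - qPlus Q q).PosSemidef ∧
      s * suppFn T lam + μ ≤ M := by
  let A : Option (Fin K) → Matrix (Fin m ⊕ Unit) (Fin m ⊕ Unit) ℝ :=
    fun o => o.elim (blockDiagOne 0 1) fun k => blockDiagOne (S k) 0
  let bounds : (Fin K → ℝ) → Option (Fin K) → ℝ := fun t o => o.elim 1 fun k => s * t k
  have hA : ∀ o, (A o).IsHermitian
    | none => isHermitian_blockDiagOne isHermitian_zero 1
    | some k => isHermitian_blockDiagOne (hS k) 0
  have hconv : Convex ℝ (bounds '' T) := by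
    rintro _ ⟨t, ht, rfl⟩ _ ⟨t', ht', rfl⟩ a b ha hb hab
    refine ⟨a • t + b • t', hT ht ht' ha hb hab, funext fun o => ?_⟩
    cases o with
    | none => simp [bounds, hab]
    | some k => simp only [bounds, Option.elim, Pi.add_apply, Pi.smul_apply, smul_eq_mul]; ring
  obtain ⟨t₀, ht₀, ht₀pos⟩ := hTpos
  have hpos : ∃ u ∈ bounds '' T, ∀ o, 0 < u o :=
    ⟨bounds t₀, ⟨t₀, ht₀, rfl⟩, fun
      | none => one_pos
      | some k => mul_pos hs (ht₀pos k)⟩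
  obtain ⟨lam, hlam, hpsd, hle⟩ := exists_sdp_dual_certificate (C := qPlus Q q) (M := M) hA
    (isSymm_qPlus hQ q) hconv hpos (by
      rintro W hW _ ⟨t, ht, rfl⟩ hWle
      exact hM W hW t ht (hWle none) fun k => hWle (some k))
  refine ⟨fun k => lam (some k), lam none, fun k => hlam _, hlam _, ?_, ?_⟩
  · rw [Fintype.sum_option] at hpsd
    rwa [← smul_blockDiagOne_add_sum_smul]
  · suffices suppFn T (fun k => lam (some k)) ≤ (M - lam none) / s by
      rw [le_div_iff₀' hs] at this
      linarith
    refine csSup_le (Set.Nonempty.image _ ⟨t₀, ht₀⟩) ?_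
    rintro _ ⟨t, ht, rfl⟩
    have hbound := hle _ ⟨t, ht, rfl⟩
    simp only [Fintype.sum_option, bounds, Option.elim, mul_left_comm _ s, ← Finset.mul_sum]
      at hbound
    rw [le_div_iff₀' hs]
    linarith

end Homogenization

section Boundedness

theorem isCompact_setOf_dotProduct_mulVec_le {m : Type*} [Fintype m] {M : Matrix m m ℝ}
    (hM : M.PosDef) (R : ℝ) : IsCompact {z | z ⬝ᵥ M *ᵥ z ≤ R} := by
  obtain ⟨B, hB⟩ := exists_transpose_mul_self_eq hM.posSemidef
  have hform (z : m → ℝ) : z ⬝ᵥ M *ᵥ z = ∑ i, (B *ᵥ z) i ^ 2 := by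
    rw [hB, ← mulVec_mulVec, dotProduct_mulVec, vecMul_transpose]
    simp only [dotProduct, sq]
  have hker : B.mulVecLin.ker = ⊥ := by
    refine LinearMap.ker_eq_bot'.2 fun z hz => by_contra fun hz0 => ?_
    have hpos := hM.dotProduct_mulVec_pos hz0
    rw [star_trivial, hform, ← mulVecLin_apply, hz] at hpos
    simp at hpos
  refine ((LinearMap.isClosedEmbedding_of_injective hker).isCompact_preimage
    (isCompact_Icc (a := fun _ => -√R) (b := fun _ => √R))).of_isClosed_subset
    (isClosed_le (by fun_prop) continuous_const) fun z hz => ?_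
  have habs (i) : |(B *ᵥ z) i| ≤ √R :=
    Real.abs_le_sqrt ((Finset.single_le_sum (fun j _ => sq_nonneg ((B *ᵥ z) j))
      (Finset.mem_univ i)).trans ((hform z).symm.trans_le hz))
  exact ⟨fun i => (abs_le.1 (habs i)).1, fun i => (abs_le.1 (habs i)).2⟩

variable {n nb K : ℕ} {T : Set (Fin K → ℝ)}

theorem isBounded_ellitope (P : Matrix (Fin n) (Fin nb) ℝ)
    {S : Fin K → Matrix (Fin nb) (Fin nb) ℝ} (hS : (∑ k, S k).PosDef) (hT : BddAbove T) {s : ℝ}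
    (hs : 0 ≤ s) : Bornology.IsBounded (ellitope P S T s) := by
  obtain ⟨t', ht'⟩ := hT
  have hcomp := (isCompact_setOf_dotProduct_mulVec_le hS (∑ k, s * t' k)).image
    (f := fun z => P *ᵥ z) (by fun_prop)
  refine hcomp.isBounded.subset ?_
  rintro _ ⟨z, t, ht, rfl, hz⟩
  refine ⟨z, ?_, rfl⟩
  rw [Set.mem_ofPred_eq, sum_mulVec, dotProduct_sum]
  exact Finset.sum_le_sum fun k _ => (hz k).trans (mul_le_mul_of_nonneg_left (ht' ht k) hs)

theorem bddAbove_quadratic_ellitope (P : Matrix (Fin n) (Fin nb) ℝ)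
    {S : Fin K → Matrix (Fin nb) (Fin nb) ℝ} (hS : (∑ k, S k).PosDef) (hT : BddAbove T) {s : ℝ}
    (hs : 0 ≤ s) (A : Matrix (Fin n) (Fin n) ℝ) (b : Fin n → ℝ) :
    BddAbove {v : ℝ | ∃ x ∈ ellitope P S T s, v = x ⬝ᵥ A *ᵥ x + 2 * (b ⬝ᵥ x)} := by
  have hcomp := (isBounded_ellitope P hS hT hs).isCompact_closure
  refine (hcomp.bddAbove_image (f := fun x => x ⬝ᵥ A *ᵥ x + 2 * (b ⬝ᵥ x)) (by fun_prop)).mono ?_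
  rintro _ ⟨x, hx, rfl⟩
  exact ⟨x, subset_closure hx, rfl⟩

theorem le_suppFn (hT : BddAbove T) {lam t : Fin K → ℝ} (hlam : ∀ k, 0 ≤ lam k) (ht : t ∈ T) :
    ∑ k, lam k * t k ≤ suppFn T lam := by
  have hmono : Monotone fun t : Fin K → ℝ => ∑ k, lam k * t k := fun t t' htt' =>
    Finset.sum_le_sum fun k _ => mul_le_mul_of_nonneg_left (htt' k) (hlam k)
  exact le_csSup (hmono.map_bddAbove hT) ⟨t, ht, rfl⟩

theorem suppFn_nonneg (hT : BddAbove T) (hTpos : ∃ t ∈ T, ∀ k, 0 < t k) {lam : Fin K → ℝ}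
    (hlam : ∀ k, 0 ≤ lam k) : 0 ≤ suppFn T lam := by
  obtain ⟨t, ht, htpos⟩ := hTpos
  exact (Finset.sum_nonneg fun k _ => mul_nonneg (hlam k) (htpos k).le).trans
    (le_suppFn hT hlam ht)

end Boundedness

theorem stmt1_general {n nb K : ℕ} (hK : 1 ≤ K)
    (P : Matrix (Fin n) (Fin nb) ℝ)
    (S : Fin K → Matrix (Fin nb) (Fin nb) ℝ)
    (hS : ∀ k, (S k).PosSemidef)
    (hSsum : (∑ k, S k).PosDef)
    (T : Set (Fin K → ℝ))
    (hTconv : Convex ℝ T) (hTbdd : BddAbove T)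
    (hTpos : ∃ t ∈ T, ∀ k, 0 < t k)
    (A : Matrix (Fin n) (Fin n) ℝ) (hA : A.IsSymm) (b : Fin n → ℝ)
    (s : ℝ) (hs : 0 < s) :
    sInf {v : ℝ | ∃ lam : Fin K → ℝ, ∃ μ : ℝ,
        (∀ k, 0 ≤ lam k) ∧ 0 ≤ μ ∧
        (blockDiagOne (∑ k, lam k • S k) μ - qPlus (Pᵀ * A * P) (Pᵀ *ᵥ b)).PosSemidef ∧
        v = s * suppFn T lam + μ} ≤
      sSup {v : ℝ | ∃ x ∈ ellitope P S T (3 * Real.log (6 * K) * s),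
        v = x ⬝ᵥ A *ᵥ x + 2 * (b ⬝ᵥ x)} := by
  have : NeZero K := ⟨by omega⟩
  have hκs : 0 ≤ 3 * Real.log (6 * K) * s :=
    mul_nonneg (mul_nonneg zero_le_three (by exact_mod_cast Real.log_natCast_nonneg (6 * K))) hs.le
  have hbdd := bddAbove_quadratic_ellitope P hSsum hTbdd hκs A b
  have hQ : (Pᵀ * A * P).IsSymm := by
    rw [IsSymm, transpose_mul, transpose_mul, transpose_transpose, hA.eq, Matrix.mul_assoc]
  obtain ⟨lam, μ, hlam, hμ, hpsd, hle⟩ := exists_dual_feasible (q := Pᵀ *ᵥ b)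
    (fun k => (hS k).1) hTconv hTpos hQ hs fun W hW t ht =>
      trace_qPlus_mul_le hS hQ (fun z hz => le_csSup hbdd ⟨P *ᵥ z, ⟨z, t, ht, rfl, fun k => by
        simpa only [Fintype.card_fin, mul_assoc] using hz k⟩, by
        rw [dotProduct_conj_mulVec, mulVec_transpose, ← dotProduct_mulVec]⟩) hW
  refine le_trans (csInf_le ⟨0, ?_⟩ ⟨lam, μ, hlam, hμ, hpsd, rfl⟩) hle
  rintro _ ⟨lam', μ', hlam', hμ', -, rfl⟩
  exact add_nonneg (mul_nonneg hs.le (suppFn_nonneg hTbdd hTpos hlam')) hμ'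

theorem stmt1 {n nb K : ℕ} (hK : 1 ≤ K)
    (P : Matrix (Fin n) (Fin nb) ℝ)
    (S : Fin K → Matrix (Fin nb) (Fin nb) ℝ)
    (hS : ∀ k, (S k).PosSemidef)
    (hSsum : (∑ k, S k).PosDef)
    (T : Set (Fin K → ℝ))
    (hTne : T.Nonempty) (hTconv : Convex ℝ T) (hTcomp : IsCompact T)
    (hTnonneg : ∀ t ∈ T, ∀ k, 0 ≤ t k)
    (hTmono : ∀ t t' : Fin K → ℝ, (∀ k, 0 ≤ t k) → (∀ k, t k ≤ t' k) → t' ∈ T → t ∈ T)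
    (hTpos : ∃ t ∈ T, ∀ k, 0 < t k)
    (A : Matrix (Fin n) (Fin n) ℝ) (hA : A.IsSymm) (b : Fin n → ℝ)
    (s : ℝ) (hs : 0 < s) :
    sInf {v : ℝ | ∃ lam : Fin K → ℝ, ∃ μ : ℝ,
        (∀ k, 0 ≤ lam k) ∧ 0 ≤ μ ∧
        (blockDiagOne (∑ k, lam k • S k) μ - qPlus (Pᵀ * A * P) (Pᵀ *ᵥ b)).PosSemidef ∧
        v = s * suppFn T lam + μ} ≤
      sSup {v : ℝ | ∃ x ∈ ellitope P S T (3 * Real.log (6 * K) * s),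
        v = x ⬝ᵥ A *ᵥ x + 2 * (b ⬝ᵥ x)} :=
  stmt1_general hK P S hS hSsum T hTconv hTcomp.isBounded.bddAbove hTpos A hA b s hs
end
end

section
/- Let K ≥ 1 be an integer, P a real n×n̄ matrix, S_1,…,S_K symmetric positive semidefinite n̄×n̄ matrices with S_1+⋯+S_K positive definite, 𝒯 ⊆ ℝ_{≥0}^K a nonempty convex compact monotone set containing a point with all coordinates positive, and ρ > 0. Let X be a symmetric n×n matrix, x ∈ ℝ^n, ξ ∈ ℝ. If there exist λ ∈ ℝ^K with λ ≥ 0 and τ ∈ ℝ such that the block matrix [[∑_k λ_k S_k − PᵀXP, −Pᵀx],[−xᵀP, τ]] is positive semidefinite and ρ·φ_𝒯(λ) + τ ≤ ξ, then for every ζ ∈ 𝒳[ρ] one has ζᵀXζ + 2xᵀζ ≤ ξ. -/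
open Matrix BigOperators

noncomputable section

/-!
Weighting the constraints `zᵀ S_k z ≤ ρ t_k` by `λ_k ≥ 0` and summing bounds `zᵀ (∑ λ_k S_k) z` by
`ρ φ_𝒯(λ)` on the whole ellitope. Evaluating the positive semidefinite block matrix at the vector
`(z, 1)` bounds `(Pz)ᵀ X (Pz) + 2 xᵀ P z` by `zᵀ (∑ λ_k S_k) z + τ`.
-/

section QuadraticForms

variable {ι m n p q R : Type*} [Fintype ι] [Fintype m] [Fintype n] [Fintype p] [Fintype q]

theorem dotProduct_sum_smul_mulVec [CommSemiring R] (c : ι → R) (A : ι → Matrix m n R)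
    (u : m → R) (v : n → R) :
    u ⬝ᵥ (∑ i, c i • A i) *ᵥ v = ∑ i, c i * (u ⬝ᵥ A i *ᵥ v) := by
  simp only [sum_mulVec, dotProduct_sum, smul_mulVec, dotProduct_smul, smul_eq_mul]

theorem mulVec_dotProduct_mulVec_mulVec [CommSemiring R] (P : Matrix p m R) (X : Matrix p q R)
    (Q : Matrix q n R) (u : m → R) (v : n → R) :
    (P *ᵥ u) ⬝ᵥ X *ᵥ (Q *ᵥ v) = u ⬝ᵥ (Pᵀ * X * Q) *ᵥ v := by
  rw [← mulVec_mulVec, ← mulVec_mulVec, dotProduct_mulVec u, vecMul_transpose]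

theorem sumElim_one_dotProduct_fromBlocks_mulVec [NonAssocSemiring R] (A : Matrix m n R)
    (b : m → R) (c : n → R) (d : R) (u : m → R) (v : n → R) :
    Sum.elim u 1 ⬝ᵥ
        fromBlocks A (replicateCol Unit b) (replicateRow Unit c) (of fun _ _ => d) *ᵥ Sum.elim v 1 =
      u ⬝ᵥ A *ᵥ v + u ⬝ᵥ b + (c ⬝ᵥ v + d) := by
  have hcol : replicateCol Unit b *ᵥ 1 = b := by
    ext i
    simp [mulVec, dotProduct]
  have hcorner : (of fun _ _ : Unit => d) *ᵥ 1 = fun _ => d := by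
    ext i
    simp [mulVec, dotProduct]
  rw [fromBlocks_mulVec, sumElim_dotProduct_sumElim, Sum.elim_comp_inl, Sum.elim_comp_inr,
    replicateRow_mulVec_eq_const, hcol, hcorner, dotProduct_add, one_dotProduct]
  simp only [Finset.univ_unique, Finset.sum_singleton, Pi.add_apply, Function.const_apply]

theorem quadratic_nonneg_of_posSemidef_fromBlocks [CommRing R] [PartialOrder R] [StarRing R]
    [TrivialStar R] {A : Matrix m m R} {b : m → R} {d : R}
    (h : (fromBlocks A (replicateCol Unit b) (replicateRow Unit b) (of fun _ _ => d)).PosSemidef)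
    (v : m → R) : 0 ≤ v ⬝ᵥ A *ᵥ v + 2 * (b ⬝ᵥ v) + d := by
  have hv := h.dotProduct_mulVec_nonneg (Sum.elim v 1)
  rw [star_trivial, sumElim_one_dotProduct_fromBlocks_mulVec, dotProduct_comm v b] at hv
  convert hv using 1
  ring

theorem quadratic_mulVec_le_of_posSemidef_fromBlocks [CommRing R] [PartialOrder R]
    [IsOrderedAddMonoid R] [StarRing R] [TrivialStar R] {M : Matrix m m R} {P : Matrix p m R}
    {X : Matrix p p R} {x : p → R} {τ : R}
    (h : (fromBlocks (M - Pᵀ * X * P) (replicateCol Unit (-(Pᵀ *ᵥ x)))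
      (replicateRow Unit (-(Pᵀ *ᵥ x))) (of fun _ _ => τ)).PosSemidef) (z : m → R) :
    (P *ᵥ z) ⬝ᵥ X *ᵥ (P *ᵥ z) + 2 * (x ⬝ᵥ P *ᵥ z) ≤ z ⬝ᵥ M *ᵥ z + τ := by
  have hz := quadratic_nonneg_of_posSemidef_fromBlocks h z
  rw [sub_mulVec, dotProduct_sub, ← mulVec_dotProduct_mulVec_mulVec, neg_dotProduct,
    mulVec_transpose, ← dotProduct_mulVec] at hz
  rw [← sub_nonneg]
  convert hz using 1
  ring

end QuadraticForms

section Ellitope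

variable {n nb K : ℕ} {P : Matrix (Fin n) (Fin nb) ℝ} {S : Fin K → Matrix (Fin nb) (Fin nb) ℝ}
  {T : Set (Fin K → ℝ)} {lam : Fin K → ℝ}

theorem sum_mul_le_suppFn (hT : BddAbove ((fun t => ∑ k, lam k * t k) '' T)) {t : Fin K → ℝ}
    (ht : t ∈ T) : ∑ k, lam k * t k ≤ suppFn T lam :=
  le_csSup hT ⟨t, ht, rfl⟩

theorem exists_mulVec_eq_and_le_of_mem_ellitope (hT : BddAbove ((fun t => ∑ k, lam k * t k) '' T))
    (hlam : ∀ k, 0 ≤ lam k) {s : ℝ} (hs : 0 ≤ s) {ζ : Fin n → ℝ} (hζ : ζ ∈ ellitope P S T s) :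
    ∃ z, P *ᵥ z = ζ ∧ z ⬝ᵥ (∑ k, lam k • S k) *ᵥ z ≤ s * suppFn T lam := by
  obtain ⟨z, t, ht, rfl, hz⟩ := hζ
  refine ⟨z, rfl, ?_⟩
  calc z ⬝ᵥ (∑ k, lam k • S k) *ᵥ z
      = ∑ k, lam k * (z ⬝ᵥ S k *ᵥ z) := dotProduct_sum_smul_mulVec lam S z z
    _ ≤ ∑ k, lam k * (s * t k) := by
        gcongr with k
        exacts [hlam k, hz k]
    _ = s * ∑ k, lam k * t k := by simp only [Finset.mul_sum, mul_left_comm]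
    _ ≤ s * suppFn T lam := by
        gcongr
        exact sum_mul_le_suppFn hT ht

theorem stmt4_general {ρ : ℝ} (hρ : 0 ≤ ρ) {X : Matrix (Fin n) (Fin n) ℝ} {x : Fin n → ℝ}
    {ξ τ : ℝ} (hT : BddAbove ((fun t => ∑ k, lam k * t k) '' T)) (hlam : ∀ k, 0 ≤ lam k)
    (hpsd : (fromBlocks ((∑ k, lam k • S k) - Pᵀ * X * P)
      (replicateCol Unit (-(Pᵀ *ᵥ x))) (replicateRow Unit (-(Pᵀ *ᵥ x)))
      (of fun _ _ => τ)).PosSemidef)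
    (hξ : ρ * suppFn T lam + τ ≤ ξ) {ζ : Fin n → ℝ} (hζ : ζ ∈ ellitope P S T ρ) :
    ζ ⬝ᵥ X *ᵥ ζ + 2 * (x ⬝ᵥ ζ) ≤ ξ := by
  obtain ⟨z, rfl, hz⟩ := exists_mulVec_eq_and_le_of_mem_ellitope hT hlam hρ hζ
  calc (P *ᵥ z) ⬝ᵥ X *ᵥ (P *ᵥ z) + 2 * (x ⬝ᵥ P *ᵥ z)
      ≤ z ⬝ᵥ (∑ k, lam k • S k) *ᵥ z + τ := quadratic_mulVec_le_of_posSemidef_fromBlocks hpsd z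
    _ ≤ ρ * suppFn T lam + τ := by gcongr
    _ ≤ ξ := hξ

end Ellitope

theorem stmt4 {n nb K : ℕ} (hK : 1 ≤ K)
    (P : Matrix (Fin n) (Fin nb) ℝ)
    (S : Fin K → Matrix (Fin nb) (Fin nb) ℝ)
    (hS : ∀ k, (S k).PosSemidef)
    (hSsum : (∑ k, S k).PosDef)
    (T : Set (Fin K → ℝ))
    (hTne : T.Nonempty) (hTconv : Convex ℝ T) (hTcomp : IsCompact T)
    (hTnonneg : ∀ t ∈ T, ∀ k, 0 ≤ t k)
    (hTmono : ∀ t t' : Fin K → ℝ, (∀ k, 0 ≤ t k) → (∀ k, t k ≤ t' k) → t' ∈ T → t ∈ T)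
    (hTpos : ∃ t ∈ T, ∀ k, 0 < t k)
    (ρ : ℝ) (hρ : 0 < ρ)
    (X : Matrix (Fin n) (Fin n) ℝ) (hX : X.IsSymm) (x : Fin n → ℝ) (ξ : ℝ)
    (hfeas : ∃ lam : Fin K → ℝ, ∃ τ : ℝ, (∀ k, 0 ≤ lam k) ∧
      (Matrix.fromBlocks ((∑ k, lam k • S k) - Pᵀ * X * P)
        (Matrix.of fun i (_ : Unit) => -(Pᵀ *ᵥ x) i)
        (Matrix.of fun (_ : Unit) j => -(Pᵀ *ᵥ x) j)
        (Matrix.of fun _ _ => τ)).PosSemidef ∧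
      ρ * suppFn T lam + τ ≤ ξ) :
    ∀ ζ ∈ ellitope P S T ρ, ζ ⬝ᵥ X *ᵥ ζ + 2 * (x ⬝ᵥ ζ) ≤ ξ := by
  obtain ⟨lam, τ, hlam, hpsd, hξ⟩ := hfeas
  exact fun _ => stmt4_general hρ.le (hTcomp.image (by fun_prop)).bddAbove hlam hpsd hξ
end
end
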